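/- arXiv:1202.0932 — 2 statements merged into one kernel-verified Lean document; each statement's English description precedes it below -/
import Mathlib

section
/- For every n ≥ 1 and all permutations σ, π ∈ S_n, the translocation distance satisfies dH(σ,π)/n ≤ d∘(σ,π) ≤ dH(σ,π), where dH denotes the Hamming distance. -/
/-- `IsMove l l'` holds if `l'` is obtained from `l` by a single translocation:
removing the element at position `i` and reinserting it at position `j`. -/
def IsMove {α : Type*} (l l' : List α) : Prop :=
  ∃ i j : Fin l.length, l' = (l.eraseIdx i).insertIdx j (l.get i)

/-- `ReachIn step m l l'` holds if `l'` can be obtained from `l` by `m` applications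
of the relation `step`. -/
def ReachIn {α : Type*} (step : List α → List α → Prop) : ℕ → List α → List α → Prop
  | 0, l, l' => l = l'
  | m+1, l, l' => ∃ l'', step l l'' ∧ ReachIn step m l'' l'

/-- The one-line notation of a permutation of `Fin n`. -/
def oneLine {n : ℕ} (σ : Equiv.Perm (Fin n)) : List (Fin n) := List.ofFn σ

/-- The translocation distance: the minimum number of translocations transforming
the one-line notation of `σ` into that of `π`. -/
noncomputable def translocDist {n : ℕ} (σ π : Equiv.Perm (Fin n)) : ℕ :=
  sInf {m | ReachIn IsMove m (oneLine σ) (oneLine π)}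

/-- The Hamming distance between two permutations: the number of positions at which
their one-line notations differ. -/
def permHammingDist {n : ℕ} (σ π : Equiv.Perm (Fin n)) : ℕ :=
  (Finset.univ.filter fun i => σ i ≠ π i).card

/-!
Two permutations share the subsequence of entries at the positions where they agree, so `dH` entries
lie outside it. One translocation moves such an entry to the place it has in the target relative to
the common subsequence, which thus grows by one; hence `d∘ ≤ dH`. The lower bound only uses that
`dH ≤ n` and that distinct permutations are at positive translocation distance.
-/

section CommonSublist

open List

variable {α : Type*} {s s₁ s₂ t u v l l' : List α} {a : α}

theorem exists_append_cons_sublist_of_length_lt (h : s <+ l) (hlt : s.length < l.length) :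
    ∃ s₁ a s₂, s = s₁ ++ s₂ ∧ s₁ ++ a :: s₂ <+ l := by
  induction h with
  | slnil => simp at hlt
  | cons a h => exact ⟨[], a, _, rfl, h.cons_cons a⟩
  | cons_cons a _ ih =>
    obtain ⟨s₁, b, s₂, rfl, h⟩ := ih (by simpa using hlt)
    exact ⟨a :: s₁, b, s₂, rfl, h.cons_cons a⟩

theorem exists_eq_append_cons_of_count_lt [DecidableEq α] (h : s <+ l)
    (hlt : s.count a < l.count a) : ∃ u v, l = u ++ a :: v ∧ s <+ u ++ v := by
  induction h with
  | slnil => simp at hlt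
  | cons b h ih =>
    obtain rfl | hab := eq_or_ne b a
    · exact ⟨[], _, rfl, h⟩
    · obtain ⟨u, v, rfl, huv⟩ := ih (by rwa [count_cons_of_ne hab] at hlt)
      exact ⟨b :: u, v, rfl, huv.cons b⟩
  | cons_cons b _ ih =>
    obtain ⟨u, v, rfl, huv⟩ := ih (by simpa only [count_cons, Nat.add_lt_add_iff_right] using hlt)
    exact ⟨b :: u, v, rfl, huv.cons_cons b⟩

theorem insertIdx_length_append (u v : List α) (a : α) :
    (u ++ v).insertIdx u.length a = u ++ a :: v := by
  induction u with
  | nil => rfl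
  | cons b u ih => simp [ih]

theorem isMove_append_cons (h : u ++ v = s ++ t) : IsMove (u ++ a :: v) (s ++ a :: t) := by
  have hlen : u.length + v.length = s.length + t.length := by simpa using congrArg length h
  refine ⟨⟨u.length, by simp⟩, ⟨s.length, by simp; omega⟩, ?_⟩
  simp [eraseIdx_append_of_length_le, h, insertIdx_length_append]

theorem IsMove.perm (h : IsMove l l') : l ~ l' := by
  obtain ⟨i, j, rfl⟩ := h
  have hj : (j : ℕ) ≤ (l.eraseIdx i).length := by
    rw [length_eraseIdx_of_lt i.isLt]
    exact Nat.le_sub_one_of_lt j.isLt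
  exact (getElem_cons_eraseIdx_perm i.isLt).symm.trans (perm_insertIdx _ _ hj).symm

theorem exists_isMove_append_cons_sublist [DecidableEq α] (h : s₁ ++ s₂ <+ l)
    (hlt : (s₁ ++ s₂).count a < l.count a) : ∃ l', IsMove l l' ∧ s₁ ++ a :: s₂ <+ l' := by
  obtain ⟨u, v, rfl, huv⟩ := exists_eq_append_cons_of_count_lt h hlt
  obtain ⟨t₁, t₂, ht, h₁, h₂⟩ := append_sublist_iff.mp huv
  exact ⟨t₁ ++ a :: t₂, isMove_append_cons ht, h₁.append (h₂.cons_cons a)⟩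

theorem reachIn_isMove_of_common_sublist {k : ℕ} (hp : l ~ l') (h : s <+ l) (h' : s <+ l')
    (hk : s.length + k = l.length) : ReachIn IsMove k l l' := by
  classical
  induction k generalizing s l with
  | zero =>
    have hl : s = l := h.eq_of_length hk
    have hl' : s = l' := h'.eq_of_length (hk.trans hp.length_eq)
    exact hl.symm.trans hl'
  | succ k ih =>
    obtain ⟨s₁, a, s₂, rfl, hext⟩ :=
      exists_append_cons_sublist_of_length_lt h' (by have := hp.length_eq; omega)
    have hlt : (s₁ ++ s₂).count a < l.count a := calc
      (s₁ ++ s₂).count a < (s₁ ++ a :: s₂).count a := by simp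
      _ ≤ l'.count a := hext.count_le a
      _ = l.count a := hp.symm.count_eq a
    obtain ⟨m, hm, hs⟩ := exists_isMove_append_cons_sublist h hlt
    refine ⟨m, hm, ih (hm.perm.symm.trans hp) hs hext ?_⟩
    have := hm.perm.length_eq
    simp only [length_append, length_cons] at hk ⊢
    omega

end CommonSublist

section Hamming

open List

variable {α : Type*} [DecidableEq α] {n : ℕ}

theorem exists_common_sublist_ofFn (f g : Fin n → α) :
    ∃ s, s <+ ofFn f ∧ s <+ ofFn g ∧ s.length + hammingDist f g = n := by
  let agree := (finRange n).filter fun i ↦ f i = g i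
  have hmap : agree.map f = agree.map g :=
    map_congr_left fun i hi ↦ of_decide_eq_true (mem_filter.mp hi).2
  refine ⟨agree.map f, ?_, ?_, ?_⟩
  · rw [ofFn_eq_map]
    exact filter_sublist.map f
  · rw [hmap, ofFn_eq_map]
    exact filter_sublist.map g
  · -- `Finset.univ : Finset (Fin n)` is `finRange n` by definition.
    have hdiff : hammingDist f g = ((finRange n).filter fun i ↦ ¬f i = g i).length := rfl
    rw [hdiff, length_map]
    simpa using (length_eq_length_filter_add (l := finRange n) fun i ↦ decide (f i = g i)).symm

theorem reachIn_isMove_hammingDist {f g : Fin n → α} (h : ofFn f ~ ofFn g) :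
    ReachIn IsMove (hammingDist f g) (ofFn f) (ofFn g) := by
  obtain ⟨s, hf, hg, hs⟩ := exists_common_sublist_ofFn f g
  exact reachIn_isMove_of_common_sublist h hf hg (by rw [hs, length_ofFn])

theorem hammingDist_le_mul_of_reachIn {step : List α → List α → Prop} {m : ℕ}
    {f g : Fin n → α} (h : ReachIn step m (ofFn f) (ofFn g)) : hammingDist f g ≤ m * n := by
  cases m with
  | zero => simp [ofFn_injective h]
  | succ m => calc
      hammingDist f g ≤ n := by simpa using hammingDist_le_card_fintype (x := f) (y := g)
      _ ≤ (m + 1) * n := Nat.le_mul_of_pos_left n m.succ_pos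

end Hamming

section Permutations

open List

variable {n : ℕ} (σ π : Equiv.Perm (Fin n))

theorem oneLine_perm_oneLine : oneLine σ ~ oneLine π :=
  (σ.ofFn_comp_perm id).trans (π.ofFn_comp_perm id).symm

theorem reachIn_isMove_permHammingDist :
    ReachIn IsMove (permHammingDist σ π) (oneLine σ) (oneLine π) :=
  reachIn_isMove_hammingDist (oneLine_perm_oneLine σ π)

theorem reachIn_isMove_translocDist :
    ReachIn IsMove (translocDist σ π) (oneLine σ) (oneLine π) :=
  Nat.sInf_mem (s := {m | ReachIn IsMove m (oneLine σ) (oneLine π)})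
    ⟨_, reachIn_isMove_permHammingDist σ π⟩

end Permutations

/-- For every `n ≥ 1` and all `σ, π ∈ S_n`,
`dH(σ,π)/n ≤ d∘(σ,π) ≤ dH(σ,π)`. -/
theorem hamming_bounds_translocDist (n : ℕ) (hn : 1 ≤ n) (σ π : Equiv.Perm (Fin n)) :
    (permHammingDist σ π : ℝ) / (n : ℝ) ≤ (translocDist σ π : ℝ) ∧
    translocDist σ π ≤ permHammingDist σ π := by
  refine ⟨?_, Nat.sInf_le (reachIn_isMove_permHammingDist σ π)⟩
  have hle : permHammingDist σ π ≤ translocDist σ π * n :=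
    hammingDist_le_mul_of_reachIn (reachIn_isMove_translocDist σ π)
  rw [div_le_iff₀ (by exact_mod_cast hn)]
  exact_mod_cast hle
end

section
/- For every n ≥ 1 and every integer r with 0 ≤ r ≤ n, the number of permutations σ ∈ S_n with d∘(σ,e) ≤ r is at most C(n,r) · n!/(n−r)!, where C(n,r) is the binomial coefficient. -/
/-!
A translocation moves one entry and leaves the relative order of the others intact, so after `m`
translocations at least `n - m` entries have never been moved: the one-line notations of `σ` and
`π` share a subsequence of length at least `n - translocDist σ π`. Hence, if
`translocDist σ π ≤ r`, then `π⁻¹ * σ` is increasing off some set `A` of `r` positions. There are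
`n.choose r` choices of `A`, and such a permutation is determined by its values on `A`: these
determine the image of the complement, on which it is the unique increasing enumeration.
-/

section ListMoves

variable {α : Type*}

theorem exists_common_sublist_of_sublist {s t l : List α}
    (hs : s.Sublist l) (ht : t.Sublist l) :
    ∃ u : List α, u.Sublist s ∧ u.Sublist t ∧ s.length + t.length ≤ l.length + u.length := by
  induction hs generalizing t with
  | slnil => exact ⟨[], List.nil_sublist _, List.nil_sublist _, by simpa using ht.length_le⟩
  | cons a _ ih =>
    cases ht with
    | cons _ ht =>
      obtain ⟨u, hus, hut, hlen⟩ := ih ht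
      exact ⟨u, hus, hut, by grind⟩
    | cons_cons _ ht =>
      obtain ⟨u, hus, hut, hlen⟩ := ih ht
      exact ⟨u, hus, hut.cons a, by grind⟩
  | cons_cons a _ ih =>
    cases ht with
    | cons _ ht =>
      obtain ⟨u, hus, hut, hlen⟩ := ih ht
      exact ⟨u, hus.cons a, hut, by grind⟩
    | cons_cons _ ht =>
      obtain ⟨u, hus, hut, hlen⟩ := ih ht
      exact ⟨a :: u, hus.cons_cons a, hut.cons_cons a, by grind⟩

namespace ReachIn

theorem trans {step : List α → List α → Prop} {a b : ℕ} {l₁ l₂ l₃ : List α}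
    (h₁₂ : ReachIn step a l₁ l₂) (h₂₃ : ReachIn step b l₂ l₃) : ReachIn step (a + b) l₁ l₃ := by
  induction a generalizing l₁ with
  | zero =>
    obtain rfl : l₁ = l₂ := h₁₂
    rwa [Nat.zero_add]
  | succ a ih =>
    obtain ⟨l, hstep, hreach⟩ := h₁₂
    rw [Nat.succ_add]
    exact ⟨l, hstep, ih hreach⟩

theorem lift {β : Type*} {step : List α → List α → Prop} {step' : List β → List β → Prop}
    (f : List α → List β) (hf : ∀ ⦃k l⦄, step k l → step' (f k) (f l)) {m : ℕ} {l l' : List α}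
    (h : ReachIn step m l l') : ReachIn step' m (f l) (f l') := by
  induction m generalizing l with
  | zero => exact congrArg f h
  | succ m ih =>
    obtain ⟨k, hstep, hreach⟩ := h
    exact ⟨f k, hf hstep, ih hreach⟩

end ReachIn

namespace IsMove

theorem cons (x : α) {l l' : List α} (h : IsMove l l') :
    IsMove (x :: l) (x :: l') := by
  obtain ⟨i, j, rfl⟩ := h
  exact ⟨i.succ, j.succ, by simp⟩

theorem swap (x y : α) (l : List α) : IsMove (y :: x :: l) (x :: y :: l) :=
  ⟨⟨0, by simp⟩, ⟨1, by simp⟩, rfl⟩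

theorem exists_common_sublist {l l' : List α} (h : IsMove l l') :
    ∃ s : List α, s.Sublist l ∧ s.Sublist l' ∧ l.length ≤ s.length + 1 := by
  obtain ⟨i, j, rfl⟩ := h
  refine ⟨l.eraseIdx i, List.eraseIdx_sublist _ _, ?_,
    Nat.sub_le_iff_le_add.1 (List.le_length_eraseIdx _ _)⟩
  have := List.eraseIdx_sublist ((l.eraseIdx i).insertIdx j (l.get i)) j
  rwa [List.eraseIdx_insertIdx_self] at this

end IsMove

theorem exists_reachIn_isMove_of_perm {l l' : List α} (h : l.Perm l') :
    ∃ m, ReachIn IsMove m l l' := by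
  induction h with
  | nil => exact ⟨0, rfl⟩
  | cons x _ ih =>
    obtain ⟨m, hm⟩ := ih
    exact ⟨m, hm.lift (x :: ·) fun _ _ ↦ IsMove.cons x⟩
  | swap x y l => exact ⟨1, _, IsMove.swap x y l, rfl⟩
  | trans _ _ ih₁ ih₂ =>
    obtain ⟨a, ha⟩ := ih₁
    obtain ⟨b, hb⟩ := ih₂
    exact ⟨a + b, ha.trans hb⟩

theorem exists_common_sublist_of_reachIn_isMove {m : ℕ} {l l' : List α}
    (h : ReachIn IsMove m l l') :
    ∃ s : List α, s.Sublist l ∧ s.Sublist l' ∧ l.length ≤ s.length + m := by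
  induction m generalizing l with
  | zero =>
    obtain rfl : l = l' := h
    exact ⟨l, List.Sublist.refl l, List.Sublist.refl l, le_rfl⟩
  | succ m ih =>
    obtain ⟨k, hmove, hreach⟩ := h
    obtain ⟨s, hsl, hsk, hs⟩ := hmove.exists_common_sublist
    obtain ⟨t, htk, htl', ht⟩ := ih hreach
    obtain ⟨u, hus, hut, hu⟩ := exists_common_sublist_of_sublist hsk htk
    exact ⟨u, hus.trans hsl, hut.trans htl', by omega⟩

end ListMoves

theorem reachIn_translocDist {n : ℕ} (σ π : Equiv.Perm (Fin n)) :
    ReachIn IsMove (translocDist σ π) (oneLine σ) (oneLine π) :=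
  Nat.sInf_mem <| exists_reachIn_isMove_of_perm <|
    (σ.ofFn_comp_perm id).trans (π.ofFn_comp_perm id).symm

theorem strictMonoOn_of_pairwise_lt_map {α β : Type*} [Preorder α] [Preorder β] {f : α → β}
    {l : List α} (hl : l.Pairwise (· < ·)) (hf : (l.map f).Pairwise (· < ·)) :
    StrictMonoOn f {x | x ∈ l} := by
  let R : α → α → Prop := fun x y ↦ (x < y → f x < f y) ∧ (y < x → f y < f x)
  have : Std.Symm R := ⟨fun _ _ h ↦ h.symm⟩
  have hR : l.Pairwise R :=
    (hl.and (List.pairwise_map.1 hf)).imp fun h ↦ ⟨fun _ ↦ h.2, fun hlt ↦ (hlt.asymm h.1).elim⟩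
  exact fun x hx y hy hxy ↦ (hR.forall hx hy hxy.ne).1 hxy

theorem exists_strictMonoOn_le_card_add_translocDist {n : ℕ} (σ π : Equiv.Perm (Fin n)) :
    ∃ B : Finset (Fin n), StrictMonoOn (π⁻¹ * σ) B ∧ n ≤ B.card + translocDist σ π := by
  obtain ⟨s, hsσ, hsπ, hs⟩ := exists_common_sublist_of_reachIn_isMove (reachIn_translocDist σ π)
  rw [oneLine, List.ofFn_eq_map, List.sublist_map_iff] at hsσ hsπ
  obtain ⟨t, ht, rfl⟩ := hsσ
  obtain ⟨u, hu, htu⟩ := hsπ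
  have ht_lt : t.Pairwise (· < ·) := (List.pairwise_lt_finRange n).sublist ht
  have hu_lt : u.Pairwise (· < ·) := (List.pairwise_lt_finRange n).sublist hu
  have map_t : t.map (π⁻¹ * σ) = u := by
    simpa [Function.comp_def] using congrArg (List.map (π⁻¹ : Equiv.Perm (Fin n))) htu
  refine ⟨t.toFinset, ?_, ?_⟩
  · rw [List.coe_toFinset]
    exact strictMonoOn_of_pairwise_lt_map ht_lt (map_t ▸ hu_lt)
  · rw [List.toFinset_card_of_nodup (ht_lt.imp ne_of_lt)]
    simpa [oneLine] using hs

theorem exists_card_eq_strictMonoOn_compl_of_translocDist_le {n r : ℕ} (hr : r ≤ n)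
    {σ π : Equiv.Perm (Fin n)} (h : translocDist σ π ≤ r) :
    ∃ A : Finset (Fin n), A.card = r ∧ StrictMonoOn (π⁻¹ * σ) (A : Set (Fin n))ᶜ := by
  obtain ⟨B, hB, hn⟩ := exists_strictMonoOn_le_card_add_translocDist σ π
  have hBr : Bᶜ.card ≤ r := by
    rw [Finset.card_compl, Fintype.card_fin]
    omega
  obtain ⟨A, hBA, hA⟩ := Finset.exists_superset_card_eq hBr (by rwa [Fintype.card_fin])
  refine ⟨A, hA, hB.mono ?_⟩
  rwa [Set.compl_subset_comm, ← Finset.coe_compl, Finset.coe_subset]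

theorem equiv_eq_of_eqOn_of_strictMonoOn_compl {α β : Type*} [LinearOrder α] [WellFoundedLT α]
    [Preorder β] {s : Set α} {σ τ : α ≃ β} (h : Set.EqOn σ τ s) (hσ : StrictMonoOn σ sᶜ)
    (hτ : StrictMonoOn τ sᶜ) : σ = τ := by
  have image_compl : σ '' sᶜ = τ '' sᶜ := by
    rw [Set.image_compl_eq σ.bijective, Set.image_compl_eq τ.bijective, h.image_eq]
  have agree_on_compl : (fun a : ↥sᶜ ↦ σ a) = fun a : ↥sᶜ ↦ τ a := by
    rw [← StrictMono.range_inj (Set.strictMonoOn_iff_strictMono.1 hσ)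
      (Set.strictMonoOn_iff_strictMono.1 hτ), ← Set.image_eq_range, ← Set.image_eq_range,
      image_compl]
  ext x
  by_cases hx : x ∈ s
  · exact h hx
  · exact congrFun agree_on_compl ⟨x, hx⟩

section Counting

variable {α : Type*} [Fintype α] [LinearOrder α]

theorem ncard_perm_strictMonoOn_compl_le (A : Finset α) :
    {σ : Equiv.Perm α | StrictMonoOn σ (A : Set α)ᶜ}.ncard ≤
      (Fintype.card α).descFactorial A.card := by
  let restrict (σ : Equiv.Perm α) : A ↪ α := (Function.Embedding.subtype _).trans σ.toEmbedding
  calc {σ : Equiv.Perm α | StrictMonoOn σ (A : Set α)ᶜ}.ncard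
      ≤ (Set.univ : Set (A ↪ α)).ncard :=
        Set.ncard_le_ncard_of_injOn restrict (fun _ _ ↦ Set.mem_univ _) fun σ hσ τ hτ hστ ↦
          equiv_eq_of_eqOn_of_strictMonoOn_compl
            (fun a ha ↦ DFunLike.congr_fun hστ (⟨a, ha⟩ : A)) hσ hτ
    _ = (Fintype.card α).descFactorial A.card := by
        rw [Set.ncard_univ, Nat.card_eq_fintype_card, Fintype.card_embedding_eq, Fintype.card_coe]

theorem ncard_perm_exists_strictMonoOn_compl_le (r : ℕ) :
    {σ : Equiv.Perm α | ∃ A : Finset α, A.card = r ∧ StrictMonoOn σ (A : Set α)ᶜ}.ncard ≤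
      (Fintype.card α).choose r * (Fintype.card α).descFactorial r := by
  have eq_biUnion :
      {σ : Equiv.Perm α | ∃ A : Finset α, A.card = r ∧ StrictMonoOn σ (A : Set α)ᶜ} =
        ⋃ A ∈ (Finset.univ : Finset α).powersetCard r,
          {σ : Equiv.Perm α | StrictMonoOn σ (A : Set α)ᶜ} := by
    ext σ
    simp
  calc {σ : Equiv.Perm α | ∃ A : Finset α, A.card = r ∧ StrictMonoOn σ (A : Set α)ᶜ}.ncard
      ≤ ∑ A ∈ (Finset.univ : Finset α).powersetCard r,
          {σ : Equiv.Perm α | StrictMonoOn σ (A : Set α)ᶜ}.ncard :=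
        eq_biUnion ▸ Finset.set_ncard_biUnion_le _ _
    _ ≤ ((Finset.univ : Finset α).powersetCard r).card • (Fintype.card α).descFactorial r :=
        Finset.sum_le_card_nsmul _ _ _ fun A hA ↦
          (Finset.mem_powersetCard_univ.1 hA) ▸ ncard_perm_strictMonoOn_compl_le A
    _ = (Fintype.card α).choose r * (Fintype.card α).descFactorial r := by
        rw [Finset.card_powersetCard, Finset.card_univ, smul_eq_mul]

end Counting

theorem card_translocBall_le_general {n : ℕ} (π : Equiv.Perm (Fin n)) {r : ℕ} (hr : r ≤ n) :
    {σ : Equiv.Perm (Fin n) | translocDist σ π ≤ r}.ncard ≤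
      n.choose r * (n.factorial / (n - r).factorial) :=
  calc {σ : Equiv.Perm (Fin n) | translocDist σ π ≤ r}.ncard
      ≤ {σ : Equiv.Perm (Fin n) |
          ∃ A : Finset (Fin n), A.card = r ∧ StrictMonoOn σ (A : Set (Fin n))ᶜ}.ncard :=
        Set.ncard_le_ncard_of_injOn (π⁻¹ * ·)
          (fun _ hσ ↦ exists_card_eq_strictMonoOn_compl_of_translocDist_le hr hσ)
          (mul_right_injective π⁻¹).injOn
    _ ≤ n.choose r * n.descFactorial r := by
        simpa only [Fintype.card_fin] using ncard_perm_exists_strictMonoOn_compl_le (α := Fin n) r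
    _ = n.choose r * (n.factorial / (n - r).factorial) := by rw [Nat.descFactorial_eq_div hr]

/-- For every `n ≥ 1` and every `0 ≤ r ≤ n`, the number of permutations `σ ∈ S_n` with
`d∘(σ,e) ≤ r` is at most `C(n,r) · n!/(n−r)!`. -/
theorem card_translocBall_le (n : ℕ) (hn : 1 ≤ n) (r : ℕ) (hr : r ≤ n) :
    {σ : Equiv.Perm (Fin n) | translocDist σ 1 ≤ r}.ncard ≤
      n.choose r * (n.factorial / (n - r).factorial) :=
  card_translocBall_le_general 1 hr
end
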